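/- Let d ≥ 5 and let U be an n-element configuration in Z^d. There is a real number a = a(d,n) such that if C = (C^1, C^2) is a clustering of U with |C^1| ≤ 3 and sep(C) ≥ a, then H_U(x) ≥ 1/(2n) for every x ∈ C^1. Moreover, regardless of the separation of C, if |C^1| ≤ 3 then H_C(1,x) ≥ 1/(2n) for every x ∈ C^1. -/

import Mathlib

open MeasureTheory

namespace HATFormal

/-- Points of the lattice `ℤ^d`. -/
abbrev Pt (d : ℕ) := Fin d → ℤ

/-- The `2d` unit steps of the simple random walk on `ℤ^d`. -/
def Dir (d : ℕ) : Set (Pt d) :=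
  {s | ∃ i : Fin d, s = Pi.single i 1 ∨ s = Pi.single i (-1)}

/-- The position, after `t` steps, of the walk started at `x` with steps `s`. -/
def wpos (d : ℕ) (x : Pt d) {T : ℕ} (s : Fin T → Pt d) (t : ℕ) : Pt d :=
  x + ∑ i ∈ Finset.univ.filter (fun i : Fin T => (i : ℕ) < t), s i

/-- The probability of an event `P` of the first `T` steps of simple random walk on `ℤ^d`. -/
noncomputable def prob (d T : ℕ) (P : (Fin T → Pt d) → Prop) : ℝ :=
  (Nat.card {s : Fin T → Pt d // (∀ i, s i ∈ Dir d) ∧ P s} : ℝ) / ((2 * d : ℕ) : ℝ) ^ T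

open Classical in
/-- `esc d A x = P_x(τ_A = ∞)` if `x ∈ A`, and `0` otherwise. -/
noncomputable def esc (d : ℕ) (A : Set (Pt d)) (x : Pt d) : ℝ :=
  if x ∈ A then ⨅ T : ℕ, prob d T (fun s => ∀ t, 1 ≤ t → t ≤ T → wpos d x s t ∉ A) else 0

/-- The capacity of `A`. -/
noncomputable def capa (d : ℕ) (A : Set (Pt d)) : ℝ := ∑' x : A, esc d A (x : Pt d)

/-- The harmonic measure `H_A(x) = esc_A(x) / cap_A`. -/
noncomputable def harm (d : ℕ) (A : Set (Pt d)) (x : Pt d) : ℝ := esc d A x / capa d A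

/-- `P_x(τ_W < ∞)`. -/
noncomputable def retProb (d : ℕ) (W : Set (Pt d)) (x : Pt d) : ℝ :=
  ∑' t : ℕ, prob d t (fun s => 1 ≤ t ∧ wpos d x s t ∈ W ∧
    ∀ u, 1 ≤ u → u < t → wpos d x s u ∉ W)

/-- `P_x(τ_W < ∞ and S_{τ_W − 1} = y)`. -/
noncomputable def hitFrom (d : ℕ) (W : Set (Pt d)) (x y : Pt d) : ℝ :=
  ∑' t : ℕ, prob d t (fun s => 1 ≤ t ∧ wpos d x s t ∈ W ∧ wpos d x s (t - 1) = y ∧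
    ∀ u, 1 ≤ u → u < t → wpos d x s u ∉ W)

/-- `P_x(τ_W < ∞ and S_{τ_W} ∈ T)`. -/
noncomputable def firstHitIn (d : ℕ) (W T : Set (Pt d)) (x : Pt d) : ℝ :=
  ∑' t : ℕ, prob d t (fun s => 1 ≤ t ∧ wpos d x s t ∈ W ∧ wpos d x s t ∈ T ∧
    ∀ u, 1 ≤ u → u < t → wpos d x s u ∉ W)

/-- `P_x(S_{τ_W − 1} = y ∣ τ_W < ∞)`. -/
noncomputable def transP (d : ℕ) (W : Set (Pt d)) (x y : Pt d) : ℝ :=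
  hitFrom d W x y / retProb d W x

/-- The Green's function of simple random walk on `ℤ^d`. -/
noncomputable def green (d : ℕ) (x : Pt d) : ℝ :=
  ∑' t : ℕ, prob d t (fun s => wpos d x s t = 0)

/-- Configurations: finite subsets of `ℤ^d`. -/
abbrev Conf (d : ℕ) := Finset (Pt d)

/-- `p_U(x, y)`, the probability that HAT activates at `x` and transports to `y`. -/
noncomputable def pHAT (d : ℕ) (U : Conf d) (x y : Pt d) : ℝ :=
  harm d (↑U) x * transP d ((↑U : Set (Pt d)) \ {x}) x y

open Classical in
/-- The transition probabilities of HAT. -/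
noncomputable def hatProb (d : ℕ) (U V : Conf d) : ℝ :=
  if V = U then ∑' z : Pt d, pHAT d U z z
  else ∑' x : Pt d, ∑' y : Pt d,
    if x ∈ U ∧ x ≠ y ∧ V = insert y (U.erase x) then pHAT d U x y else 0

instance (d : ℕ) : MeasurableSpace (Conf d) := ⊤

/-- `μ` is the law of HAT started from `U`. -/
def IsHATLaw (d : ℕ) (U : Conf d) (μ : Measure (ℕ → Conf d)) : Prop :=
  IsProbabilityMeasure μ ∧
  ∀ (t : ℕ) (u : ℕ → Conf d),
    μ {ω | ∀ s ≤ t, ω s = u s} =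
      (if u 0 = U then 1 else 0) *
        ∏ s ∈ Finset.range t, ENNReal.ofReal (hatProb d (u s) (u (s + 1)))

/-- A signed permutation plus translation of `ℤ^d`. -/
def SymImage (d : ℕ) (σ : Equiv.Perm (Fin d)) (ε : Fin d → ℤ) (v : Pt d) (x : Pt d) : Pt d :=
  fun i => v i + ε i * x (σ i)

/-- `SymEq d U V` holds when `V = gU` for a symmetry `g` of `ℤ^d`. -/
def SymEq (d : ℕ) (U V : Conf d) : Prop :=
  ∃ (σ : Equiv.Perm (Fin d)) (ε : Fin d → ℤ) (v : Pt d),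
    (∀ i, ε i = 1 ∨ ε i = -1) ∧ V = U.image (SymImage d σ ε v)

/-- Euclidean distance on `ℤ^d`. -/
noncomputable def dist0 (d : ℕ) (x y : Pt d) : ℝ :=
  Real.sqrt (∑ i, ((x i : ℝ) - (y i : ℝ)) ^ 2)

/-- Euclidean distance between finite subsets of `ℤ^d`. -/
noncomputable def setDist (d : ℕ) (A B : Finset (Pt d)) : ℝ :=
  sInf {r : ℝ | ∃ x ∈ A, ∃ y ∈ B, r = dist0 d x y}

/-- Euclidean diameter of a finite subset of `ℤ^d`. -/
noncomputable def diam0 (d : ℕ) (A : Finset (Pt d)) : ℝ :=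
  sSup {r : ℝ | ∃ x ∈ A, ∃ y ∈ A, r = dist0 d x y}

/-- Lattice (nearest-neighbor) adjacency in `ℤ^d`. -/
def latAdj (d : ℕ) (x y : Pt d) : Prop := (∑ i, (x i - y i).natAbs) = 1

/-- Exterior lattice boundary of a set. -/
def bdry (d : ℕ) (A : Set (Pt d)) : Set (Pt d) := {z | z ∉ A ∧ ∃ w ∈ A, latAdj d z w}

/-- Non-isolated configurations: some exposed element has a lattice neighbor in the set. -/
def NonIso (d : ℕ) (U : Conf d) : Prop :=
  ∃ x ∈ U, 0 < esc d (↑U) x ∧ ∃ y ∈ U, latAdj d x y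

/-- `C` is a clustering (ordered partition into nonempty clusters) of `U`. -/
def IsClusteringOf (d : ℕ) {k : ℕ} (C : Fin k → Finset (Pt d)) (U : Finset (Pt d)) : Prop :=
  (∀ i, (C i).Nonempty) ∧ (∀ i j, i ≠ j → Disjoint (C i) (C j)) ∧
    Finset.univ.biUnion C = U

/-- `C^{≠ i}`, the union of the clusters other than `i`. -/
def others (d : ℕ) {k : ℕ} (C : Fin k → Finset (Pt d)) (i : Fin k) : Finset (Pt d) :=
  Finset.univ.biUnion fun j => if j = i then ∅ else C j

/-- The separation of a clustering. -/
noncomputable def sep (d : ℕ) {k : ℕ} (C : Fin k → Finset (Pt d)) : ℝ :=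
  ⨅ i, setDist d (C i) (others d C i)

/-- `(a, b)` separated dimer-or-trimer (DOT) clusterings. -/
def IsDOT (d : ℕ) {k : ℕ} (C : Fin k → Finset (Pt d)) (a b : ℝ) : Prop :=
  (∀ i, (C i).card = 2 ∨ (C i).card = 3) ∧ a ≤ sep d C ∧
    ∀ i, diam0 d (C i) ≤ b * Real.log (setDist d (C i) (others d C i))

/-- Clusterings with an unspecified number of clusters. -/
abbrev ClusteringS (d : ℕ) := Σ k : ℕ, Fin k → Finset (Pt d)

/-- `π(C)`, the union of the clusters of `C`. -/
def confOf (d : ℕ) (C : ClusteringS d) : Conf d := Finset.univ.biUnion C.2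

/-- `C ∈ 𝒞(U, a, b)`. -/
def InC (d : ℕ) (U : Conf d) (a b : ℝ) (C : ClusteringS d) : Prop :=
  IsClusteringOf d C.2 U ∧ IsDOT d C.2 a b

/-- `U ∈ 𝒰_{d,n}(a, b)`. -/
def InU (d n : ℕ) (a b : ℝ) (U : Conf d) : Prop :=
  U.card = n ∧ ∃ C : ClusteringS d, InC d U a b C

/-- `C` is a clustering of an `n`-element configuration. -/
def IsClusteringConf (d n : ℕ) (C : ClusteringS d) : Prop :=
  (∀ i, (C.2 i).Nonempty) ∧ (∀ i j, i ≠ j → Disjoint (C.2 i) (C.2 j)) ∧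
    (confOf d C).card = n

open Classical in
/-- One step of the natural clustering. -/
noncomputable def clustStep (d : ℕ) (Ut Ut1 : Conf d) (C : ClusteringS d) : ClusteringS d :=
  if Ut1 = Ut then C
  else if h : ∃ p : Pt d × Pt d × Fin C.1,
      Ut \ Ut1 = {p.1} ∧ Ut1 \ Ut = {p.2.1} ∧ p.1 ∈ C.2 p.2.2 then
    ⟨C.1, Function.update C.2 h.choose.2.2
      (insert h.choose.2.1 ((C.2 h.choose.2.2).erase h.choose.1))⟩
  else ⟨1, fun _ => Ut1⟩

/-- The natural clustering of the trajectory `ω` with initial clustering `C0`. -/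
noncomputable def natClust (d : ℕ) (ω : ℕ → Conf d) (C0 : ClusteringS d) : ℕ → ClusteringS d
  | 0 => C0
  | t + 1 => clustStep d (ω t) (ω (t + 1)) (natClust d ω C0 t)

/-- `a_s = s^{1/2 − n^{−100}} + 100 n`. -/
noncomputable def aSep (n s : ℕ) : ℝ :=
  (s : ℝ) ^ ((1 : ℝ) / 2 - (n : ℝ) ^ (-(100 : ℝ))) + 100 * n

/-- `C^{i, x, y}`: remove `x` from cluster `i` of `C` and add `y` to that cluster. -/
def updC (d : ℕ) (C : ClusteringS d) (i : Fin C.1) (x y : Pt d) : ClusteringS d :=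
  ⟨C.1, Function.update C.2 i (insert y ((C.2 i).erase x))⟩

open Classical in
/-- The transition probabilities of the lifting of HAT to clusterings. -/
noncomputable def liftProb (d : ℕ) (E0 E1 : ClusteringS d) : ℝ :=
  ∑' x : Pt d, ∑' y : Pt d,
    if ∃ i : Fin E0.1, x ∈ E0.2 i ∧ E1 = updC d E0 i x y
    then pHAT d (confOf d E0) x y else 0

/-- The capacity of a clustering: the sum of the capacities of its clusters. -/
noncomputable def capS (d : ℕ) (C : ClusteringS d) : ℝ := ∑ i, capa d (↑(C.2 i))

/-- `H_C(i, x) = esc_{C^i}(x) / cap_C`. -/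
noncomputable def harmS (d : ℕ) (C : ClusteringS d) (i : Fin C.1) (x : Pt d) : ℝ :=
  esc d (↑(C.2 i)) x / capS d C

/-- `q_C(i, x, y)`. -/
noncomputable def qIHAT (d : ℕ) (C : ClusteringS d) (i : Fin C.1) (x y : Pt d) : ℝ :=
  harmS d C i x * transP d ((↑(C.2 i) : Set (Pt d)) \ {x}) x y

open Classical in
/-- The transition probabilities of intracluster HAT (IHAT). -/
noncomputable def ihatProb (d : ℕ) (D E : ClusteringS d) : ℝ :=
  ∑' x : Pt d, ∑' y : Pt d, ∑ i : Fin D.1,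
    if x ∈ D.2 i ∧ E = updC d D i x y then qIHAT d D i x y else 0

instance (d : ℕ) : MeasurableSpace (ClusteringS d) := ⊤

open Classical in
/-- `μ` is the law of the lifted HAT chain started from `E0`. -/
def IsLiftLaw (d : ℕ) (E0 : ClusteringS d) (μ : Measure (ℕ → ClusteringS d)) : Prop :=
  IsProbabilityMeasure μ ∧
  ∀ (t : ℕ) (u : ℕ → ClusteringS d),
    μ {ω | ∀ s ≤ t, ω s = u s} =
      (if u 0 = E0 then 1 else 0) *
        ∏ s ∈ Finset.range t, ENNReal.ofReal (liftProb d (u s) (u (s + 1)))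

open Classical in
/-- `μ` is the law of intracluster HAT started from `D0`. -/
def IsIHATLaw (d : ℕ) (D0 : ClusteringS d) (μ : Measure (ℕ → ClusteringS d)) : Prop :=
  IsProbabilityMeasure μ ∧
  ∀ (t : ℕ) (u : ℕ → ClusteringS d),
    μ {ω | ∀ s ≤ t, ω s = u s} =
      (if u 0 = D0 then 1 else 0) *
        ∏ s ∈ Finset.range t, ENNReal.ofReal (ihatProb d (u s) (u (s + 1)))

/-- `Pairs(E0, E1)`. -/
def Pairs (d : ℕ) (E0 E1 : ClusteringS d) : Set (Pt d × Pt d) :=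
  {p | 0 < pHAT d (confOf d E0) p.1 p.2 ∧
    ∃ i : Fin E0.1, p.1 ∈ E0.2 i ∧ E1 = updC d E0 i p.1 p.2}

/-- `Triples(E0, E1)`. -/
def Triples (d : ℕ) (E0 E1 : ClusteringS d) : Set (Fin E0.1 × Pt d × Pt d) :=
  {q | 0 < qIHAT d E0 q.1 q.2.1 q.2.2 ∧ E1 = updC d E0 q.1 q.2.1 q.2.2}

/-- The first standard basis vector of `ℤ^d`. -/
def e1v (d : ℕ) : Pt d := fun i => if (i : ℕ) = 0 then 1 else 0

/-- Reference dimers and trimers. -/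
def Ref (d : ℕ) : Set (Finset (Pt d)) :=
  {A | ∃ x : Pt d, A = {x, x + e1v d} ∨ A = {x, x + e1v d, x + e1v d + e1v d}}

/-- *-adjacency in `ℤ^d`: distinct points differing by at most one in each coordinate. -/
def starAdj (d : ℕ) (x y : Pt d) : Prop := x ≠ y ∧ ∀ i, (x i - y i).natAbs ≤ 1

/-- The *-visible boundary of `A`. -/
def visBdry (d : ℕ) (A : Finset (Pt d)) : Set (Pt d) :=
  {x | (∃ y ∈ A, starAdj d x y) ∧
    ∃ γ : ℕ → Pt d, γ 0 = x ∧ (∀ t, latAdj d (γ t) (γ (t + 1))) ∧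
      (∀ t, γ t ∉ A) ∧ ∀ r : ℝ, ∃ t, r < dist0 d (γ t) 0}

/-- `A` is connected in the nearest-neighbor graph of `ℤ^d`. -/
def LatConnected (d : ℕ) (A : Finset (Pt d)) : Prop :=
  ∀ x ∈ A, ∀ y ∈ A, ∃ (L : ℕ) (γ : ℕ → Pt d), γ 0 = x ∧ γ L = y ∧
    (∀ t < L, latAdj d (γ t) (γ (t + 1))) ∧ ∀ t ≤ L, γ t ∈ A

/-- Strict lexicographic order on `ℤ^d`. -/
def lexLt (d : ℕ) (x y : Pt d) : Prop :=
  ∃ i : Fin d, (∀ j, j < i → x j = y j) ∧ x i < y i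

/-- `x` is the lex (least) element of `A`. -/
def IsLex (d : ℕ) (A : Finset (Pt d)) (x : Pt d) : Prop :=
  x ∈ A ∧ ∀ y ∈ A, y ≠ x → lexLt d x y

/-! ### A radial superharmonic function -/

/-- Radial profile of the superharmonic function: a function of the squared norm. -/
noncomputable def FF (m : ℤ) : ℝ :=
  if m = 0 then 379 / 100 else if m = 1 then 2 / 3 else if m = 4 then 21 / 100
  else 1 / ((m : ℝ) + 1)

/-- Squared Euclidean norm. -/
def nsq {d : ℕ} (x : Pt d) : ℤ := ∑ i, x i ^ 2

lemma FF_gen (m : ℤ) (h : 5 ≤ m) : FF m = 1 / ((m : ℝ) + 1) := by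
  unfold FF
  rw [if_neg (by omega), if_neg (by omega), if_neg (by omega)]

lemma FF_nonneg (m : ℤ) (h : 0 ≤ m) : 0 ≤ FF m := by
  have : (0 : ℝ) ≤ m := by exact_mod_cast h
  unfold FF
  split_ifs <;> positivity

lemma FF_le (m : ℤ) (h : 1 ≤ m) : FF m ≤ 2 / 3 := by
  have h' : (1 : ℝ) ≤ m := by exact_mod_cast h
  unfold FF
  split_ifs <;> try norm_num
  · omega
  · rw [inv_le_comm₀ (by linarith) (by norm_num)]; linarith

lemma FF_key_small (N : ℤ) (h1 : 1 ≤ N) (h2 : N ≤ 9) :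
    ∃ lam : ℝ, (∀ k : ℤ, 0 ≤ k → k ^ 2 ≤ N →
      FF (N + 1 + 2 * k) + FF (N + 1 - 2 * k) ≤ 2 * FF (N + 1) + lam * (k : ℝ) ^ 2) ∧
      lam * N ≤ 10 * (FF N - FF (N + 1)) ∧ FF (N + 1) ≤ FF N := by
  refine ⟨10 * (FF N - FF (N + 1)) / N, ?_, ?_, ?_⟩
  · intro k hk0 hk
    have hk3 : k ≤ 3 := by nlinarith
    interval_cases N <;> interval_cases k <;> first | omega | (norm_num [FF])
  · have : (N : ℝ) ≠ 0 := by
      have : N ≠ 0 := by omega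
      exact_mod_cast this
    field_simp; exact le_refl _
  · interval_cases N <;> norm_num [FF]

lemma FF_key_large (N : ℤ) (h1 : 10 ≤ N) :
    ∃ lam : ℝ, (∀ k : ℤ, 0 ≤ k → k ^ 2 ≤ N →
      FF (N + 1 + 2 * k) + FF (N + 1 - 2 * k) ≤ 2 * FF (N + 1) + lam * (k : ℝ) ^ 2) ∧
      lam * N ≤ 10 * (FF N - FF (N + 1)) ∧ FF (N + 1) ≤ FF N := by
  have hN : (10 : ℝ) ≤ N := by exact_mod_cast h1
  have e1 : FF N = 1 / ((N : ℝ) + 1) := FF_gen _ (by omega)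
  have e2 : FF (N + 1) = 1 / ((N : ℝ) + 2) := by
    rw [FF_gen _ (by omega)]; push_cast; ring
  have hpos : (0 : ℝ) < ((N : ℝ) + 2) ^ 2 - 4 * N := by nlinarith
  refine ⟨8 / (((N : ℝ) + 2) * (((N : ℝ) + 2) ^ 2 - 4 * N)), ?_, ?_, ?_⟩
  · intro k hk0 hk
    have hge : 5 ≤ N + 1 - 2 * k := by
      by_cases hk4 : 4 ≤ k
      · nlinarith
      · omega
    have hkR : (k : ℝ) ^ 2 ≤ N := by exact_mod_cast hk
    have hk0R : (0 : ℝ) ≤ k := by exact_mod_cast hk0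
    have hgeR : (5 : ℝ) ≤ (N : ℝ) + 1 - 2 * k := by exact_mod_cast hge
    rw [e2, FF_gen _ (by omega), FF_gen _ hge]
    push_cast
    have hq : (0 : ℝ) < ((N : ℝ) + 2) ^ 2 - 4 * (k : ℝ) ^ 2 := by nlinarith
    have : 1 / ((N : ℝ) + 1 + 2 * k + 1) + 1 / ((N : ℝ) + 1 - 2 * k + 1)
        = 2 * (1 / ((N : ℝ) + 2))
          + 8 / (((N : ℝ) + 2) * (((N : ℝ) + 2) ^ 2 - 4 * (k : ℝ) ^ 2)) * (k : ℝ) ^ 2 := by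
      have a1 : (N : ℝ) + 1 + 2 * k + 1 ≠ 0 := by linarith
      have a2 : (N : ℝ) + 1 - 2 * k + 1 ≠ 0 := by linarith
      have a3 : (N : ℝ) + 2 ≠ 0 := by linarith
      have a4 : (N : ℝ) + 2 + 2 * k ≠ 0 := by linarith
      have a5 : (N : ℝ) + 2 - 2 * k ≠ 0 := by linarith
      have e3 : ((N : ℝ) + 2) ^ 2 - 4 * (k : ℝ) ^ 2
          = ((N : ℝ) + 2 + 2 * k) * ((N : ℝ) + 2 - 2 * k) := by ring
      have e4 : (N : ℝ) + 1 + 2 * k + 1 = (N : ℝ) + 2 + 2 * k := by ring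
      have e5 : (N : ℝ) + 1 - 2 * k + 1 = (N : ℝ) + 2 - 2 * k := by ring
      rw [e3, e4, e5]
      field_simp
      ring
    rw [this]
    gcongr
  · rw [e1, e2, div_sub_div _ _ (by positivity) (by positivity), div_mul_eq_mul_div, ← mul_div_assoc,
      div_le_div_iff₀ (by positivity) (by positivity)]
    have : 8 * (N : ℝ) * ((N : ℝ) + 1) ≤ 10 * (((N : ℝ) + 2) ^ 2 - 4 * N) := by nlinarith
    have h3 := mul_le_mul_of_nonneg_right this (show (0 : ℝ) ≤ (N : ℝ) + 2 by linarith)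
    nlinarith
  · rw [e1, e2]
    gcongr; norm_num

lemma FF_key (N : ℤ) (h1 : 1 ≤ N) :
    ∃ lam : ℝ, (∀ k : ℤ, k ^ 2 ≤ N →
      FF (N + 1 + 2 * k) + FF (N + 1 - 2 * k) ≤ 2 * FF (N + 1) + lam * (k : ℝ) ^ 2) ∧
      lam * N ≤ 10 * (FF N - FF (N + 1)) ∧ FF (N + 1) ≤ FF N := by
  have : ∃ lam : ℝ, (∀ k : ℤ, 0 ≤ k → k ^ 2 ≤ N →
      FF (N + 1 + 2 * k) + FF (N + 1 - 2 * k) ≤ 2 * FF (N + 1) + lam * (k : ℝ) ^ 2) ∧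
      lam * N ≤ 10 * (FF N - FF (N + 1)) ∧ FF (N + 1) ≤ FF N := by
    by_cases h : N ≤ 9
    · exact FF_key_small N h1 h
    · exact FF_key_large N (by omega)
  obtain ⟨lam, ha, hb, hc⟩ := this
  refine ⟨lam, ?_, hb, hc⟩
  intro k hk
  rcases le_total 0 k with h0 | h0
  · exact ha k h0 hk
  · have := ha (-k) (by omega) (by simpa using hk)
    have e1 : N + 1 + 2 * -k = N + 1 - 2 * k := by ring
    have e2 : N + 1 - 2 * -k = N + 1 + 2 * k := by ring
    rw [e1, e2] at this
    push_cast at this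
    rw [neg_sq] at this
    linarith

lemma nsq_single_add {d : ℕ} (x : Pt d) (i : Fin d) (e : ℤ) :
    nsq (x + Pi.single i e) = nsq x + 2 * e * x i + e ^ 2 := by
  unfold nsq
  have : ∀ j, (x + Pi.single i e : Pt d) j ^ 2
      = x j ^ 2 + (if j = i then 2 * e * x i + e ^ 2 else 0) := by
    intro j
    by_cases h : j = i
    · subst h; simp; ring
    · simp [h]
  simp_rw [this]
  rw [Finset.sum_add_distrib]
  simp; ring

lemma nsq_nonneg {d : ℕ} (x : Pt d) : 0 ≤ nsq x := Finset.sum_nonneg fun i _ => sq_nonneg _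

lemma nsq_eq_zero {d : ℕ} (x : Pt d) : nsq x = 0 ↔ x = 0 := by
  unfold nsq
  rw [Finset.sum_eq_zero_iff_of_nonneg (fun i _ => sq_nonneg _)]
  constructor
  · intro h; funext i; simpa using h i (Finset.mem_univ i)
  · rintro rfl; simp

lemma superharm {d : ℕ} (hd : 5 ≤ d) (x : Pt d) (hx : x ≠ 0) :
    ∑ i : Fin d, (FF (nsq (x + Pi.single i 1)) + FF (nsq (x + Pi.single i (-1))))
      ≤ 2 * d * FF (nsq x) := by
  have hN : 1 ≤ nsq x := by
    have h1 := nsq_nonneg x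
    have h2 : nsq x ≠ 0 := fun h => hx ((nsq_eq_zero x).1 h)
    omega
  obtain ⟨lam, ha, hb, hc⟩ := FF_key (nsq x) hN
  have hle : ∀ i, x i ^ 2 ≤ nsq x := fun i =>
    Finset.single_le_sum (f := fun i => x i ^ 2) (fun i _ => sq_nonneg _) (Finset.mem_univ i)
  have hdR : (5 : ℝ) ≤ d := by exact_mod_cast hd
  calc ∑ i : Fin d, (FF (nsq (x + Pi.single i 1)) + FF (nsq (x + Pi.single i (-1))))
      ≤ ∑ i : Fin d, (2 * FF (nsq x + 1) + lam * (x i : ℝ) ^ 2) := by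
        apply Finset.sum_le_sum
        intro i _
        have := ha (x i) (hle i)
        rw [nsq_single_add, nsq_single_add]
        have e1 : nsq x + 2 * 1 * x i + 1 ^ 2 = nsq x + 1 + 2 * x i := by ring
        have e2 : nsq x + 2 * (-1) * x i + (-1) ^ 2 = nsq x + 1 - 2 * x i := by ring
        rw [e1, e2]; exact this
    _ = 2 * d * FF (nsq x + 1) + lam * (nsq x : ℤ) := by
        rw [Finset.sum_add_distrib]
        have : ((nsq x : ℤ) : ℝ) = ∑ i, (x i : ℝ) ^ 2 := by simp [nsq]
        rw [this, Finset.mul_sum, Finset.sum_const, Finset.card_univ, Fintype.card_fin, nsmul_eq_mul]; ring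
    _ ≤ 2 * d * FF (nsq x) := by nlinarith

/-! ### Counting -/

open Classical in
/-- The steps as a finset. -/
noncomputable def DirF (d : ℕ) : Finset (Pt d) :=
  Finset.univ.image (fun p : Fin d ⊕ Fin d =>
    Sum.elim (fun i => (Pi.single i 1 : Pt d)) (fun i => Pi.single i (-1)) p)

lemma mem_DirF {d : ℕ} (s : Pt d) : s ∈ DirF d ↔ s ∈ Dir d := by
  simp only [DirF, Dir, Finset.mem_image, Finset.mem_univ, true_and, Set.mem_ofPred_eq]
  constructor
  · rintro ⟨i | i, rfl⟩
    · exact ⟨i, Or.inl rfl⟩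
    · exact ⟨i, Or.inr rfl⟩
  · rintro ⟨i, rfl | rfl⟩
    · exact ⟨Sum.inl i, rfl⟩
    · exact ⟨Sum.inr i, rfl⟩

lemma dir_inj (d : ℕ) : Function.Injective (fun p : Fin d ⊕ Fin d =>
    Sum.elim (fun i => (Pi.single i 1 : Pt d)) (fun i => Pi.single i (-1)) p) := by
  have key : ∀ (i j : Fin d) (a b : ℤ), a ≠ 0 →
      (Pi.single i a : Pt d) = Pi.single j b → i = j ∧ a = b := by
    intro i j a b ha h
    have h1 := congrFun h i
    by_cases hij : i = j
    · subst hij; simp at h1; exact ⟨rfl, h1⟩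
    · simp [hij] at h1; exact absurd h1 ha
  rintro (i | i) (j | j) h <;> simp only [Sum.elim_inl, Sum.elim_inr] at h
  · rw [(key i j _ _ (by norm_num) h).1]
  · have := (key i j _ _ (by norm_num) h).2; omega
  · have := (key i j _ _ (by norm_num) h).2; omega
  · rw [(key i j _ _ (by norm_num) h).1]

lemma sum_DirF {d : ℕ} (f : Pt d → ℝ) :
    ∑ e ∈ DirF d, f e = ∑ i : Fin d, (f (Pi.single i 1) + f (Pi.single i (-1))) := by
  classical
  unfold DirF
  rw [Finset.sum_image (fun a _ b _ h => dir_inj d h), Fintype.sum_sum_type,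
    Finset.sum_add_distrib]
  rfl

lemma card_DirF (d : ℕ) : (DirF d).card = 2 * d := by
  classical
  unfold DirF
  rw [Finset.card_image_of_injective _ (dir_inj d)]
  simp; ring

open Classical in
/-- Paths as a finset. -/
noncomputable def PathF (d T : ℕ) (P : (Fin T → Pt d) → Prop) : Finset (Fin T → Pt d) :=
  (Fintype.piFinset (fun _ : Fin T => DirF d)).filter P

lemma mem_PathF {d T : ℕ} {P : (Fin T → Pt d) → Prop} {s : Fin T → Pt d} :
    s ∈ PathF d T P ↔ (∀ i, s i ∈ Dir d) ∧ P s := by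
  simp [PathF, Fintype.mem_piFinset, mem_DirF]

lemma prob_eq (d T : ℕ) (P : (Fin T → Pt d) → Prop) :
    prob d T P = ((PathF d T P).card : ℝ) / ((2 * d : ℕ) : ℝ) ^ T := by
  unfold prob
  congr 2
  apply Nat.subtype_card
  intro s; exact mem_PathF

lemma prob_nonneg (d T : ℕ) (P : (Fin T → Pt d) → Prop) : 0 ≤ prob d T P := by
  rw [prob_eq]; positivity

lemma prob_mono (d T : ℕ) {P Q : (Fin T → Pt d) → Prop} (h : ∀ s, P s → Q s) :
    prob d T P ≤ prob d T Q := by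
  rw [prob_eq, prob_eq]
  gcongr
  intro s
  rw [mem_PathF, mem_PathF]
  exact fun hs => ⟨hs.1, h s hs.2⟩

lemma prob_true (d T : ℕ) (hd : 0 < d) : prob d T (fun _ => True) = 1 := by
  rw [prob_eq]
  have : (PathF d T (fun _ => True)).card = (2 * d) ^ T := by
    simp [PathF, Fintype.card_piFinset, card_DirF]
  rw [this]
  push_cast
  apply div_self
  positivity

lemma prob_or (d T : ℕ) (P Q : (Fin T → Pt d) → Prop) :
    prob d T (fun s => P s ∨ Q s) ≤ prob d T P + prob d T Q := by
  classical
  rw [prob_eq, prob_eq, prob_eq, ← add_div]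
  gcongr
  have : PathF d T (fun s => P s ∨ Q s) ⊆ PathF d T P ∪ PathF d T Q := by
    intro s
    simp only [Finset.mem_union, mem_PathF]
    tauto
  exact_mod_cast (Finset.card_le_card this).trans (Finset.card_union_le _ _)

lemma prob_exists (d T : ℕ) {ι : Type*} (S : Finset ι) (P : ι → (Fin T → Pt d) → Prop) :
    prob d T (fun s => ∃ y ∈ S, P y s) ≤ ∑ y ∈ S, prob d T (P y) := by
  classical
  induction S using Finset.induction_on with
  | empty =>
    rw [prob_eq]
    have : PathF d T (fun s => ∃ y ∈ (∅ : Finset ι), P y s) = ∅ := by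
      ext s; simp [mem_PathF]
    rw [this]; simp
  | insert a S ha ih =>
    rw [Finset.sum_insert ha]
    refine le_trans ?_ (add_le_add_right ih _)
    refine le_trans (prob_mono d T ?_) (prob_or d T _ _)
    rintro s ⟨y, hy, hP⟩
    rcases Finset.mem_insert.1 hy with rfl | hy
    · exact Or.inl hP
    · exact Or.inr ⟨y, hy, hP⟩

lemma prob_succ (d T : ℕ) (P : (Fin (T + 1) → Pt d) → Prop) :
    prob d (T + 1) P
      = (∑ e ∈ DirF d, prob d T (fun s => P (Fin.cons e s))) / ((2 * d : ℕ) : ℝ) := by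
  classical
  simp_rw [prob_eq]
  rw [← Finset.sum_div, div_div, ← pow_succ]
  congr 1
  rw [← Nat.cast_sum]
  congr 1
  rw [← Finset.card_sigma]
  refine Finset.card_bij' (fun s _ => (⟨s 0, Fin.tail s⟩ : Sigma fun _ : Pt d => (Fin T → Pt d)))
    (fun p _ => Fin.cons p.1 p.2) ?_ ?_ ?_ ?_
  · intro s hs
    rw [mem_PathF] at hs
    simp only [Finset.mem_sigma, mem_DirF, mem_PathF, Fin.cons_self_tail]
    exact ⟨hs.1 0, fun i => hs.1 _, hs.2⟩
  · rintro ⟨e, s⟩ hs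
    simp only [Finset.mem_sigma, mem_DirF, mem_PathF] at hs
    rw [mem_PathF]
    refine ⟨fun i => ?_, hs.2.2⟩
    refine Fin.cases ?_ (fun j => ?_) i
    · simpa using hs.1
    · simpa using hs.2.1 j
  · intro s hs; simp
  · rintro ⟨e, s⟩ hs; simp

lemma wpos_zero (d : ℕ) (x : Pt d) {T : ℕ} (s : Fin T → Pt d) : wpos d x s 0 = x := by
  simp [wpos]

lemma wpos_cons (d : ℕ) (x e : Pt d) {T : ℕ} (s : Fin T → Pt d) (t : ℕ) :
    wpos d x (Fin.cons e s : Fin (T + 1) → Pt d) (t + 1) = wpos d (x + e) s t := by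
  unfold wpos
  rw [Finset.sum_filter, Finset.sum_filter, Fin.sum_univ_succ]
  simp [add_assoc]

lemma wpos_sub (d : ℕ) (x y : Pt d) {T : ℕ} (s : Fin T → Pt d) (t : ℕ) :
    wpos d (x - y) s t = wpos d x s t - y := by
  unfold wpos; abel

/-- hitting the origin by time `T`, time 0 included -/
lemma hit_bound {d : ℕ} (hd : 5 ≤ d) (T : ℕ) : ∀ x : Pt d,
    prob d T (fun s => ∃ t ≤ T, wpos d x s t = 0) ≤ FF (nsq x) / (379 / 100) := by
  induction T with
  | zero =>
    intro x
    by_cases hx : x = 0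
    · refine (prob_mono d 0 (Q := fun _ => True) (fun _ _ => trivial)).trans ?_
      rw [prob_true d 0 (by omega), (nsq_eq_zero x).2 hx]
      norm_num [FF]
    · have : prob d 0 (fun s => ∃ t ≤ 0, wpos d x s t = 0) = 0 := by
        rw [prob_eq]
        have : PathF d 0 (fun s => ∃ t ≤ 0, wpos d x s t = 0) = ∅ := by
          ext s
          simp [mem_PathF, wpos_zero, hx]
        rw [this]; simp
      rw [this]
      have := FF_nonneg _ (nsq_nonneg x)
      positivity
  | succ T ih =>
    intro x
    by_cases hx : x = 0
    · refine (prob_mono d _ (Q := fun _ => True) (fun _ _ => trivial)).trans ?_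
      rw [prob_true d _ (by omega), (nsq_eq_zero x).2 hx]
      norm_num [FF]
    · rw [prob_succ]
      have hd0 : (0 : ℝ) < ((2 * d : ℕ) : ℝ) := by
        have : 0 < 2 * d := by omega
        exact_mod_cast this
      rw [div_le_iff₀ hd0]
      calc _ ≤ ∑ e ∈ DirF d, FF (nsq (x + e)) / (379 / 100) := by
            apply Finset.sum_le_sum
            intro e _
            refine le_trans (prob_mono d T ?_) (ih (x + e))
            rintro s ⟨t, ht, h⟩
            cases t with
            | zero => rw [wpos_zero] at h; exact absurd h hx
            | succ t => exact ⟨t, by omega, by rw [wpos_cons] at h; exact h⟩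
        _ ≤ _ := by
            rw [← Finset.sum_div, sum_DirF, div_mul_eq_mul_div]
            gcongr
            have := superharm hd x hx
            push_cast
            linarith

lemma hit_from {d : ℕ} (hd : 5 ≤ d) (T : ℕ) (x y : Pt d) (hxy : x ≠ y) :
    prob d T (fun s => ∃ t, 1 ≤ t ∧ t ≤ T ∧ wpos d x s t = y)
      ≤ FF (nsq (x - y)) / (379 / 100) := by
  refine le_trans (prob_mono d T ?_) (hit_bound hd T (x - y))
  rintro s ⟨t, _, h1, h2⟩
  exact ⟨t, h1, by rw [wpos_sub, h2, sub_self]⟩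

lemma nsq_pos {d : ℕ} {x y : Pt d} (hxy : x ≠ y) : 1 ≤ nsq (x - y) := by
  have h1 := nsq_nonneg (x - y)
  have h2 : nsq (x - y) ≠ 0 := fun h => hxy (sub_eq_zero.1 ((nsq_eq_zero _).1 h))
  omega

lemma hit_from' {d : ℕ} (hd : 5 ≤ d) (T : ℕ) (x y : Pt d) (hxy : x ≠ y) :
    prob d T (fun s => ∃ t, 1 ≤ t ∧ t ≤ T ∧ wpos d x s t = y) ≤ 18 / 100 := by
  refine (hit_from hd T x y hxy).trans ?_
  have := FF_le _ (nsq_pos hxy)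
  rw [div_le_iff₀ (by norm_num)]
  linarith

lemma return_bound {d : ℕ} (hd : 5 ≤ d) (T : ℕ) :
    prob d T (fun s => ∃ t, 1 ≤ t ∧ t ≤ T ∧ wpos d 0 s t = 0) ≤ 18 / 100 := by
  cases T with
  | zero =>
    have : PathF d 0 (fun s => ∃ t, 1 ≤ t ∧ t ≤ 0 ∧ wpos d 0 s t = 0) = ∅ := by
      ext s
      simp only [mem_PathF, Finset.notMem_empty, iff_false]
      rintro ⟨_, t, h1, h2, _⟩
      omega
    rw [prob_eq, this]; norm_num
  | succ T =>
    rw [prob_succ]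
    have hd0 : (0 : ℝ) < ((2 * d : ℕ) : ℝ) := by
      have : 0 < 2 * d := by omega
      exact_mod_cast this
    rw [div_le_iff₀ hd0]
    calc _ ≤ ∑ e ∈ DirF d, (18 / 100 : ℝ) := by
          apply Finset.sum_le_sum
          intro e he
          refine le_trans (prob_mono d T ?_) ((hit_bound hd T e).trans ?_)
          · rintro s ⟨t, h0, ht, h⟩
            cases t with
            | zero => omega
            | succ t => exact ⟨t, by omega, by rw [wpos_cons, zero_add] at h; exact h⟩
          · have : nsq e = 1 := by
              obtain ⟨i, rfl | rfl⟩ := (mem_DirF e).1 he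
              · have := nsq_single_add (0 : Pt d) i 1
                simpa [nsq] using this
              · have := nsq_single_add (0 : Pt d) i (-1)
                simpa [nsq] using this
            rw [this]; norm_num [FF]
      _ = _ := by simp [card_DirF]; ring

/-! ### Escape probabilities -/

/-- Finite-horizon avoidance. -/
noncomputable def av (d : ℕ) (A : Set (Pt d)) (x : Pt d) (T : ℕ) : ℝ :=
  prob d T (fun s => ∀ t, 1 ≤ t → t ≤ T → wpos d x s t ∉ A)

lemma av_bdd (d : ℕ) (A : Set (Pt d)) (x : Pt d) : BddBelow (Set.range (av d A x)) :=
  ⟨0, by rintro _ ⟨T, rfl⟩; exact prob_nonneg _ _ _⟩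

/-- The escape probability from a point. -/
noncomputable def p0 (d : ℕ) : ℝ := ⨅ T, av d {0} 0 T

lemma av_single (d : ℕ) (x : Pt d) (T : ℕ) : av d {x} x T = av d {0} 0 T := by
  unfold av
  congr 1
  funext s
  have : ∀ t, wpos d 0 s t = wpos d x s t - x := fun t => by
    rw [← wpos_sub, sub_self]
  simp [this, sub_eq_zero]

lemma esc_eq {d : ℕ} {A : Set (Pt d)} {x : Pt d} (hx : x ∈ A) : esc d A x = ⨅ T, av d A x T := by
  unfold esc
  rw [if_pos hx]
  rfl

lemma p0_ge {d : ℕ} (hd : 5 ≤ d) : 82 / 100 ≤ p0 d := by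
  apply le_ciInf
  intro T
  have h1 : (1 : ℝ) ≤ av d {0} 0 T
      + prob d T (fun s => ∃ t, 1 ≤ t ∧ t ≤ T ∧ wpos d 0 s t = 0) := by
    rw [← prob_true d T (by omega)]
    refine le_trans (prob_mono d T ?_) (prob_or d T _ _)
    intro s _
    by_cases h : ∃ t, 1 ≤ t ∧ t ≤ T ∧ wpos d 0 s t = 0
    · exact Or.inr h
    · left
      intro t h1 h2 h3
      exact h ⟨t, h1, h2, h3⟩
  have := return_bound hd T
  linarith

lemma esc_le {d : ℕ} {A : Set (Pt d)} {x : Pt d} (hx : x ∈ A) : esc d A x ≤ p0 d := by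
  rw [esc_eq hx]
  apply ciInf_mono (av_bdd _ _ _)
  intro T
  rw [← av_single d x T]
  apply prob_mono
  intro s h t h1 h2 h3
  apply h t h1 h2
  rw [Set.mem_singleton_iff.1 h3]
  exact hx

lemma esc_ge {d : ℕ} (hd : 5 ≤ d) (A : Finset (Pt d)) {x : Pt d} (hx : x ∈ A) (b : Pt d → ℝ)
    (hb : ∀ y ∈ A.erase x, FF (nsq (x - y)) / (379 / 100) ≤ b y) :
    p0 d - ∑ y ∈ A.erase x, b y ≤ esc d (↑A) x := by
  rw [esc_eq (by exact_mod_cast hx)]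
  apply le_ciInf
  intro T
  have h0 : p0 d ≤ av d {x} x T := by
    rw [av_single]; exact ciInf_le (av_bdd _ _ _) T
  have h1 : av d {x} x T ≤ av d (↑A) x T
      + prob d T (fun s => ∃ y ∈ A.erase x, ∃ t, 1 ≤ t ∧ t ≤ T ∧ wpos d x s t = y) := by
    refine le_trans (prob_mono d T ?_) (prob_or d T _ _)
    intro s hs
    by_cases h : ∃ y ∈ A.erase x, ∃ t, 1 ≤ t ∧ t ≤ T ∧ wpos d x s t = y
    · exact Or.inr h
    · left
      intro t ht1 ht2 ht3
      exact h ⟨_, Finset.mem_erase.2 ⟨fun he => hs t ht1 ht2 he, ht3⟩, t, ht1, ht2, rfl⟩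
  have h2 := prob_exists d T (A.erase x)
    (fun y s => ∃ t, 1 ≤ t ∧ t ≤ T ∧ wpos d x s t = y)
  have h3 : ∑ y ∈ A.erase x, prob d T (fun s => ∃ t, 1 ≤ t ∧ t ≤ T ∧ wpos d x s t = y)
      ≤ ∑ y ∈ A.erase x, b y := by
    apply Finset.sum_le_sum
    intro y hy
    exact (hit_from hd T x y (Finset.ne_of_mem_erase hy).symm).trans (hb y hy)
  linarith

lemma esc_nonneg (d : ℕ) (A : Set (Pt d)) (x : Pt d) : 0 ≤ esc d A x := by
  unfold esc
  split_ifs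
  · exact Real.iInf_nonneg fun T => prob_nonneg _ _ _
  · exact le_refl _

lemma capa_eq (d : ℕ) (A : Finset (Pt d)) : capa d (↑A) = ∑ x ∈ A, esc d (↑A) x := by
  unfold capa
  exact Finset.tsum_subtype A (fun x => esc d (↑A) x)

lemma capa_le (d : ℕ) (A : Finset (Pt d)) : capa d (↑A) ≤ A.card * p0 d := by
  rw [capa_eq, ← nsmul_eq_mul]
  apply Finset.sum_le_card_nsmul
  intro x hx
  exact esc_le (by exact_mod_cast hx)

lemma capa_ge (d : ℕ) (A : Finset (Pt d)) {x : Pt d} (hx : x ∈ A) :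
    esc d (↑A) x ≤ capa d (↑A) := by
  rw [capa_eq]
  exact Finset.single_le_sum (f := fun x => esc d (↑A) x) (fun y _ => esc_nonneg _ _ _) hx

lemma capa_nonneg (d : ℕ) (A : Finset (Pt d)) : 0 ≤ capa d (↑A) := by
  rw [capa_eq]
  exact Finset.sum_nonneg fun y _ => esc_nonneg _ _ _

lemma final_div {n e c p : ℝ} (hn : 0 < n) (hp : 0 < p) (he : p / 2 ≤ e) (hc : c ≤ n * p)
    (hec : e ≤ c) : 1 / (2 * n) ≤ e / c := by
  have hc0 : 0 < c := by linarith
  rw [div_le_div_iff₀ (by positivity) hc0]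
  nlinarith

lemma FF_near {m : ℤ} (h : 1 ≤ m) : FF m / (379 / 100) ≤ 18 / 100 := by
  have := FF_le _ h
  rw [div_le_iff₀ (by norm_num)]
  linarith

lemma dist0_sq (d : ℕ) (x y : Pt d) : dist0 d x y ^ 2 = (nsq (x - y) : ℤ) := by
  unfold dist0 nsq
  rw [Real.sq_sqrt (Finset.sum_nonneg fun i _ => sq_nonneg _)]
  push_cast
  simp

lemma sep_le {d : ℕ} {C1 C2 : Finset (Pt d)} {x y : Pt d} (hx : x ∈ C1) (hy : y ∈ C2) :
    sep d ![C1, C2] ≤ dist0 d x y := by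
  unfold sep
  refine (ciInf_le (Set.finite_range _).bddBelow 0).trans ?_
  unfold setDist
  apply csInf_le
  · refine ⟨0, ?_⟩
    rintro r ⟨_, _, _, _, rfl⟩
    exact Real.sqrt_nonneg _
  · refine ⟨x, by simpa using hx, y, ?_, rfl⟩
    unfold others
    rw [Finset.mem_biUnion]
    exact ⟨1, Finset.mem_univ _, by simpa using hy⟩

/-- **Harmonic measure lower bound.** Let `d ≥ 5` and let `U` be an `n`-element
configuration in `ℤ^d`. There is `a = a(d,n)` such that if `C = (C¹, C²)` is a clustering
of `U` with `|C¹| ≤ 3` and `sep(C) ≥ a`, then `H_U(x) ≥ 1/(2n)` for `x ∈ C¹`; moreover,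
regardless of the separation, `H_C(1,x) ≥ 1/(2n)` for `x ∈ C¹`. -/
theorem min_hm (d n : ℕ) (hd : 5 ≤ d) :
    ∃ a : ℝ, ∀ U : Conf d, U.card = n →
      ∀ C1 C2 : Finset (Pt d),
        IsClusteringOf d ![C1, C2] U → C1.card ≤ 3 →
          (a ≤ sep d ![C1, C2] → ∀ x ∈ C1, 1 / (2 * (n : ℝ)) ≤ harm d (↑U) x) ∧
          (∀ x ∈ C1, 1 / (2 * (n : ℝ)) ≤
            harmS d ⟨2, ![C1, C2]⟩ ⟨0, Nat.zero_lt_two⟩ x) := by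
  refine ⟨20 * n + 10, ?_⟩
  intro U hU C1 C2 hC h3
  obtain ⟨-, hdisj, hun⟩ := hC
  have hdis : Disjoint C1 C2 := by simpa using hdisj 0 1 (by decide)
  have hUn : U = C1 ∪ C2 := by
    rw [← hun]; ext z; simp [Finset.mem_biUnion, Fin.exists_fin_two]
  have hcard : C1.card + C2.card = n := by
    rw [← hU, hUn, Finset.card_union_of_disjoint hdis]
  have hp := p0_ge hd
  have hnpos : ∀ x ∈ C1, (0 : ℝ) < n := by
    intro x hx
    have : 0 < C1.card := Finset.card_pos.2 ⟨x, hx⟩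
    have : 0 < n := by omega
    exact_mod_cast this
  have hnear : ∀ x ∈ C1, ∑ y ∈ C1.erase x, (18 / 100 : ℝ) ≤ 36 / 100 := by
    intro x hx
    rw [Finset.sum_const, nsmul_eq_mul, Finset.card_erase_of_mem hx]
    have : C1.card - 1 ≤ 2 := by omega
    have : ((C1.card - 1 : ℕ) : ℝ) ≤ 2 := by exact_mod_cast this
    linarith
  constructor
  · intro hsep x hx
    have hn := hnpos x hx
    have hxU : x ∈ U := by rw [hUn]; exact Finset.mem_union_left _ hx
    have hfar : ∀ y ∈ C2, FF (nsq (x - y)) / (379 / 100) ≤ 5 / 100 / n := by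
      intro y hy
      have h1 : 20 * (n : ℝ) + 10 ≤ dist0 d x y := hsep.trans (sep_le hx hy)
      have h2 := dist0_sq d x y
      have h4 : 20 * (n : ℝ) + 10 ≤ (nsq (x - y) : ℤ) := by nlinarith
      have h5 : 5 ≤ nsq (x - y) := by
        have : (5 : ℝ) ≤ (nsq (x - y) : ℤ) := by linarith
        exact_mod_cast this
      rw [FF_gen _ h5, div_div, div_div, div_le_div_iff₀ (by nlinarith) (by positivity)]
      nlinarith
    have hes : p0 d / 2 ≤ esc d (↑U) x := by
      classical
      refine le_trans ?_ (esc_ge hd U hxU (fun y => if y ∈ C2 then 5 / 100 / n else 18 / 100) ?_)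
      · have e : U.erase x = C1.erase x ∪ C2 := by
          rw [hUn, Finset.erase_union_distrib,
            Finset.erase_eq_of_notMem (Finset.disjoint_left.1 hdis hx)]
        rw [e, Finset.sum_union (hdis.mono_left (Finset.erase_subset _ _))]
        have s1 : ∑ y ∈ C1.erase x, (if y ∈ C2 then 5 / 100 / (n : ℝ) else 18 / 100)
            ≤ 36 / 100 := by
          refine le_trans (le_of_eq (Finset.sum_congr rfl fun y hy => ?_)) (hnear x hx)
          rw [if_neg (Finset.disjoint_left.1 hdis (Finset.mem_of_mem_erase hy))]
        have s2 : ∑ y ∈ C2, (if y ∈ C2 then 5 / 100 / (n : ℝ) else 18 / 100) ≤ 5 / 100 := by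
          rw [Finset.sum_congr rfl fun y hy => if_pos hy, Finset.sum_const, nsmul_eq_mul,
            mul_div_assoc', div_le_iff₀ hn]
          have : (C2.card : ℝ) ≤ n := by
            have : C2.card ≤ n := by omega
            exact_mod_cast this
          linarith
        linarith
      · intro y hy
        split_ifs with h
        · exact hfar y h
        · exact FF_near (nsq_pos (Finset.ne_of_mem_erase hy).symm)
    unfold harm
    refine final_div hn (by linarith) hes ?_ (capa_ge d U hxU)
    rw [← hU]; exact capa_le d U
  · intro x hx
    have hn := hnpos x hx
    have hes : p0 d / 2 ≤ esc d (↑C1) x := by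
      refine le_trans ?_ (esc_ge hd C1 hx (fun _ => 18 / 100) ?_)
      · have := hnear x hx
        linarith
      · intro y hy
        exact FF_near (nsq_pos (Finset.ne_of_mem_erase hy).symm)
    have hcap : capS d ⟨2, ![C1, C2]⟩ = capa d (↑C1) + capa d (↑C2) := by
      unfold capS
      simp [Fin.sum_univ_two]
    have hh : harmS d ⟨2, ![C1, C2]⟩ ⟨0, Nat.zero_lt_two⟩ x
        = esc d (↑C1) x / (capa d (↑C1) + capa d (↑C2)) := by
      unfold harmS
      rw [hcap]
      rfl
    rw [hh]
    refine final_div hn (by linarith) hes ?_ ?_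
    · have h1 := capa_le d C1
      have h2 := capa_le d C2
      rw [← hcard]; push_cast; linarith
    · have h1 := capa_ge d C1 hx
      have h2 := capa_nonneg d C2
      linarith

end HATFormal
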